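/- arXiv:2409.04554 — 8 statements merged into one kernel-verified Lean document; each statement's English description precedes it below -/
import Mathlib

section
/- Let N be a finite set, C a finite family of subsets of N, and let S ∈ C be minimal in C (no T ∈ C satisfies T ⊊ S). Then there exists a binary point (x,y) ∈ {0,1}^N × {0,1} such that (x,y) ∈ P̄(C \ {S}) but (x,y) ∉ P̄(C). In fact one may take y = 1, x_j = 0 for j ∈ S and x_j = 1 for j ∉ S. -/
/-- The polytope `P̄(C) = {(x,y) ∈ [0,1]^N × [0,1] : ∑_{j∈S} x_j ≥ y for all S ∈ C}`. -/
def Pbar {N : Type*} [Fintype N] (C : Finset (Finset N)) : Set ((N → ℝ) × ℝ) :=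
  {p | (∀ j, p.1 j ∈ Set.Icc (0 : ℝ) 1) ∧ p.2 ∈ Set.Icc (0 : ℝ) 1 ∧
    ∀ S ∈ C, p.2 ≤ ∑ j ∈ S, p.1 j}

section ComplementPoint

variable {N : Type*} [DecidableEq N]

theorem sum_ite_mem_zero_one_eq_card_sdiff {R : Type*} [AddCommMonoidWithOne R]
    (S T : Finset N) : ∑ j ∈ T, (if j ∈ S then (0 : R) else 1) = (T \ S).card := by
  simp_rw [← ite_not (_ ∈ S), Finset.sum_boole, Finset.filter_notMem_eq_sdiff]

/-- The binary point `(x, y)` with `y = 1` and `x` the characteristic vector of the complement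
of `S`; it separates `P̄(C \ {S})` from `P̄(C)` when `S` is minimal in `C`. -/
def complementPoint (S : Finset N) : (N → ℝ) × ℝ :=
  (fun j => if j ∈ S then 0 else 1, 1)

theorem complementPoint_fst_eq_zero_or_one (S : Finset N) (j : N) :
    (complementPoint S).1 j = 0 ∨ (complementPoint S).1 j = 1 :=
  ite_eq_or_eq _ _ _

theorem complementPoint_fst_mem_Icc (S : Finset N) (j : N) :
    (complementPoint S).1 j ∈ Set.Icc (0 : ℝ) 1 := by
  rcases complementPoint_fst_eq_zero_or_one S j with h | h <;> simp [h]

theorem complementPoint_snd_le_sum_iff (S T : Finset N) :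
    (complementPoint S).2 ≤ ∑ j ∈ T, (complementPoint S).1 j ↔ ¬ T ⊆ S := by
  simp only [complementPoint, sum_ite_mem_zero_one_eq_card_sdiff, Nat.one_le_cast,
    Finset.one_le_card, Finset.sdiff_nonempty]

theorem complementPoint_mem_pbar_iff [Fintype N] {D : Finset (Finset N)} {S : Finset N} :
    complementPoint S ∈ Pbar D ↔ ∀ T ∈ D, ¬ T ⊆ S := by
  have snd_mem : (complementPoint S).2 ∈ Set.Icc (0 : ℝ) 1 := ⟨zero_le_one, le_rfl⟩
  simp only [Pbar, Set.mem_ofPred_eq, complementPoint_fst_mem_Icc, snd_mem,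
    complementPoint_snd_le_sum_iff, implies_true, true_and]

theorem complementPoint_mem_pbar_erase_iff [Fintype N] {C : Finset (Finset N)} {S : Finset N} :
    complementPoint S ∈ Pbar (C.erase S) ↔ ∀ T ∈ C, ¬ T ⊂ S := by
  simp only [complementPoint_mem_pbar_iff, Finset.mem_erase, Finset.ssubset_iff_subset_ne]
  tauto

theorem complementPoint_notMem_pbar [Fintype N] {C : Finset (Finset N)} {S : Finset N}
    (hS : S ∈ C) : complementPoint S ∉ Pbar C :=
  fun h => complementPoint_mem_pbar_iff.mp h S hS subset_rfl

end ComplementPoint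

/-- Proposition 1(ii) of the paper.
If `S ∈ C` is minimal in `C`, then there is a binary point `(x,y)` lying in
`P̄(C \ {S})` but not in `P̄(C)`; in fact one may take `y = 1`, `x_j = 0` for `j ∈ S`
and `x_j = 1` for `j ∉ S`. -/
theorem stmt_2 {N : Type*} [Fintype N] [DecidableEq N] (C : Finset (Finset N))
    (S : Finset N) (hS : S ∈ C) (hmin : ∀ T ∈ C, ¬ T ⊂ S) :
    ∃ p : (N → ℝ) × ℝ,
      (∀ j, p.1 j = 0 ∨ p.1 j = 1) ∧ (p.2 = 0 ∨ p.2 = 1) ∧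
      p ∈ Pbar (C.erase S) ∧ p ∉ Pbar C ∧
      p = ((fun j => if j ∈ S then (0 : ℝ) else 1), (1 : ℝ)) :=
  ⟨complementPoint S, complementPoint_fst_eq_zero_or_one S, Or.inr rfl,
    complementPoint_mem_pbar_erase_iff.mpr hmin, complementPoint_notMem_pbar hS, rfl⟩
end

section
/- Let N be a finite set, C a finite family of nonempty subsets of N, and let S ∈ C be minimal in C (no T ∈ C satisfies T ⊊ S). Then the inequality ∑_{j∈S} x_j ≥ y is valid for all (x,y) ∈ P̄(C) ∩ ({0,1}^N × {0,1}), and the following |N|+1 points are affinely independent, belong to P̄(C) ∩ ({0,1}^N × {0,1}), and satisfy ∑_{j∈S} x_j = y: the point (0,0); the points (e_j, 0) for each j ∈ N \ S; and the points (e_j + ∑_{j'∈N\S} e_{j'}, 1) for each j ∈ S, where e_j denotes the j-th unit vector. (Hence ∑_{j∈S} x_j ≥ y is facet-defining for conv(P̄(C) ∩ {0,1}^{|N|+1}).) -/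
/-- The `|N| + 1` points used in the facet proof: `(0,0)`; `(e_j, 0)` for `j ∉ S`;
and `(e_j + ∑_{j' ∉ S} e_{j'}, 1)` for `j ∈ S`. -/
def facetPoints {N : Type*} [DecidableEq N] (S : Finset N) :
    Option N → (N → ℝ) × ℝ
  | none => (fun _ => 0, 0)
  | some j =>
      if j ∈ S then ((fun j' => if j' = j ∨ j' ∉ S then 1 else 0), 1)
      else ((fun j' => if j' = j then 1 else 0), 0)

/-!
A binary point `(x, 1)` lies in `P̄(C)` exactly when the support of `x` meets every member of `C`.
For `j ∈ S`, a set avoiding `{j} ∪ Sᶜ` would be a proper subset of `S`, which minimality excludes.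
Affine independence descends along affine maps, and subtracting `y • 𝟙_{Sᶜ}` from `x` sends the
points to the vertices of the standard simplex.
-/

section AffineIndependent

variable {k V P ι : Type*} [Ring k] [AddCommGroup V] [Module k V] [AddTorsor V P]

theorem affineIndependent_option_iff_linearIndependent_vsub {p : Option ι → P} :
    AffineIndependent k p ↔ LinearIndependent k fun i ↦ (p (some i) -ᵥ p none : V) := by
  classical
  rw [affineIndependent_iff_linearIndependent_vsub k p none]
  exact (linearIndependent_equiv (Equiv.optionSubtype none ⟨Equiv.refl (Option ι), rfl⟩)).symm

end AffineIndependent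

section Pbar

variable {N : Type*} [Fintype N] {C : Finset (Finset N)}

theorem prodMk_zero_mem_Pbar {x : N → ℝ} (hx : ∀ j, x j ∈ Set.Icc (0 : ℝ) 1) :
    (x, (0 : ℝ)) ∈ Pbar C :=
  ⟨hx, ⟨le_rfl, zero_le_one⟩, fun _ _ ↦ Finset.sum_nonneg fun j _ ↦ (hx j).1⟩

theorem prodMk_one_mem_Pbar_iff {x : N → ℝ} (hx : ∀ j, x j = 0 ∨ x j = 1) :
    (x, (1 : ℝ)) ∈ Pbar C ↔ ∀ T ∈ C, ∃ j ∈ T, x j = 1 := by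
  have hx_mem (j : N) : x j ∈ Set.Icc (0 : ℝ) 1 := by
    rcases hx j with h | h <;> simp [h]
  refine ⟨fun hmem T hT ↦ ?_, fun hhit ↦ ⟨hx_mem, ⟨zero_le_one, le_rfl⟩, fun T hT ↦ ?_⟩⟩
  · by_contra! hmiss
    have hsum : ∑ j ∈ T, x j = 0 :=
      Finset.sum_eq_zero fun j hj ↦ (hx j).resolve_right (hmiss j hj)
    exact not_le_of_gt one_pos (hsum ▸ hmem.2.2 T hT)
  · obtain ⟨j, hjT, hj⟩ := hhit T hT
    calc (1 : ℝ) = x j := hj.symm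
      _ ≤ ∑ i ∈ T, x i := Finset.single_le_sum (fun i _ ↦ (hx_mem i).1) hjT

end Pbar

section facetPoints

variable {N : Type*}

theorem exists_mem_eq_or_notMem_of_not_ssubset {S T : Finset N} (h : ¬ T ⊂ S) {j : N}
    (hj : j ∈ S) : ∃ k ∈ T, k = j ∨ k ∉ S := by
  by_contra! hT
  exact h ⟨fun k hk ↦ (hT k hk).2, fun hST ↦ (hT j (hST hj)).1 rfl⟩

variable [DecidableEq N] {S : Finset N} {j : N}

theorem facetPoints_none : facetPoints S none = 0 := rfl

theorem facetPoints_some_of_mem (hj : j ∈ S) :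
    facetPoints S (some j) = (Pi.single j 1 + (S : Set N)ᶜ.indicator 1, 1) := by
  ext k
  · by_cases hkj : k = j
    · subst hkj
      simp [facetPoints, hj]
    · simp [facetPoints, hj, hkj, Set.indicator_apply]
  · simp [facetPoints, hj]

theorem facetPoints_some_of_notMem (hj : j ∉ S) :
    facetPoints S (some j) = (Pi.single j 1, 0) := by
  ext k <;> simp [facetPoints, hj, Pi.single_apply]

theorem facetPoints_fst_eq_zero_or_one (S : Finset N) (i : Option N) (k : N) :
    (facetPoints S i).1 k = 0 ∨ (facetPoints S i).1 k = 1 := by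
  unfold facetPoints
  grind

theorem facetPoints_snd_eq_zero_or_one (S : Finset N) (i : Option N) :
    (facetPoints S i).2 = 0 ∨ (facetPoints S i).2 = 1 := by
  unfold facetPoints
  grind

theorem sum_facetPoints_fst (S : Finset N) (i : Option N) :
    ∑ k ∈ S, (facetPoints S i).1 k = (facetPoints S i).2 := by
  rcases i with _ | j
  · simp [facetPoints_none]
  · by_cases hj : j ∈ S
    · have hcompl : ∑ k ∈ S, (S : Set N)ᶜ.indicator (1 : N → ℝ) k = 0 :=
        Finset.sum_eq_zero fun k hk ↦ by simp [hk]
      simp [facetPoints_some_of_mem hj, Finset.sum_add_distrib, hj, hcompl]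
    · simp [facetPoints_some_of_notMem hj, hj]

theorem facetPoints_mem_Pbar [Fintype N] {C : Finset (Finset N)} (hmin : ∀ T ∈ C, ¬ T ⊂ S)
    (i : Option N) : facetPoints S i ∈ Pbar C := by
  rcases i with _ | j
  · exact prodMk_zero_mem_Pbar fun _ ↦ ⟨le_rfl, zero_le_one⟩
  · by_cases hj : j ∈ S
    · have hbinary := facetPoints_fst_eq_zero_or_one S (some j)
      rw [facetPoints_some_of_mem hj] at hbinary ⊢
      refine (prodMk_one_mem_Pbar_iff hbinary).mpr fun T hT ↦ ?_
      obtain ⟨k, hkT, rfl | hkS⟩ := exists_mem_eq_or_notMem_of_not_ssubset (hmin T hT) hj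
      · exact ⟨k, hkT, by simp [hj]⟩
      · exact ⟨k, hkT, by simp [hkS, ne_of_mem_of_not_mem hj hkS]⟩
    · rw [facetPoints_some_of_notMem hj]
      refine prodMk_zero_mem_Pbar fun k ↦ ?_
      rw [Pi.single_apply]
      split_ifs <;> simp

/-- The linear map `(x, y) ↦ x - y • 𝟙_{Sᶜ}`, which straightens `facetPoints S` into the
origin and the standard unit vectors. -/
noncomputable def facetShear (S : Finset N) : (N → ℝ) × ℝ →ₗ[ℝ] N → ℝ :=
  LinearMap.fst ℝ _ _ - (LinearMap.snd ℝ _ _).smulRight ((S : Set N)ᶜ.indicator 1)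

theorem facetShear_facetPoints_some (S : Finset N) (j : N) :
    facetShear S (facetPoints S (some j)) = Pi.single j 1 := by
  by_cases hj : j ∈ S
  · simp [facetShear, facetPoints_some_of_mem hj]
  · simp [facetShear, facetPoints_some_of_notMem hj]

theorem affineIndependent_facetPoints (S : Finset N) : AffineIndependent ℝ (facetPoints S) := by
  apply AffineIndependent.of_comp (facetShear S).toAffineMap
  rw [affineIndependent_option_iff_linearIndependent_vsub]
  simpa [facetPoints_none, facetShear_facetPoints_some] using
    Pi.linearIndependent_single_one N ℝ

end facetPoints

/-- Proposition 1(iii) of the paper.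
Let `C` be a finite family of nonempty subsets of the finite set `N` and `S ∈ C` be minimal.
Then `∑_{j∈S} x_j ≥ y` is valid for all binary points of `P̄(C)`, and the `|N| + 1`
points `facetPoints S` are binary, belong to `P̄(C)`, satisfy `∑_{j∈S} x_j = y`,
and are affinely independent (hence the inequality is facet-defining for the
convex hull of the binary points of `P̄(C)`). -/
theorem stmt_3 {N : Type*} [Fintype N] [DecidableEq N] (C : Finset (Finset N))
    (hne : ∀ T ∈ C, T.Nonempty) (S : Finset N) (hS : S ∈ C)
    (hmin : ∀ T ∈ C, ¬ T ⊂ S) :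
    (∀ p ∈ Pbar C, (∀ j, p.1 j = 0 ∨ p.1 j = 1) → (p.2 = 0 ∨ p.2 = 1) →
        p.2 ≤ ∑ j ∈ S, p.1 j) ∧
    (∀ i : Option N,
        facetPoints S i ∈ Pbar C ∧
        (∀ j, (facetPoints S i).1 j = 0 ∨ (facetPoints S i).1 j = 1) ∧
        ((facetPoints S i).2 = 0 ∨ (facetPoints S i).2 = 1) ∧
        (∑ j ∈ S, (facetPoints S i).1 j) = (facetPoints S i).2) ∧
    AffineIndependent ℝ (facetPoints S) := by
  refine ⟨fun p hp _ _ ↦ hp.2.2 S hS, fun i ↦ ⟨?_, ?_, ?_, ?_⟩, affineIndependent_facetPoints S⟩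
  · exact facetPoints_mem_Pbar hmin i
  · exact facetPoints_fst_eq_zero_or_one S i
  · exact facetPoints_snd_eq_zero_or_one S i
  · exact sum_facetPoints_fst S i
end

section
/- Let N be a finite set and C a finite family of subsets of N. If (x*, y*) is an extreme point (vertex) of the polytope P̄(C) = {(x,y) ∈ [0,1]^N × [0,1] : ∑_{j∈S} x_j ≥ y for every S ∈ C}, then y* ∈ {0,1}. -/
/-!
If `0 < y < 1`, splitting each coordinate as `x j = min (x j) y + (x j - y)⁺` gives
`(x, y) = y • (min x y / y, 1) + (1 - y) • ((x - y)⁺ / (1 - y), 0)`.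
The first point satisfies the covering inequalities because truncating nonnegative numbers at `y`
cannot bring a sum that was at least `y` below `y`; the second satisfies them trivially. So `(x, y)`
lies strictly between two points of the polytope with different last coordinates.
-/

section Truncation

variable {M : Type*} [LinearOrder M]

lemma min_add_le_min_add_min [AddCommMonoid M] [IsOrderedAddMonoid M] {a b c : M}
    (ha : 0 ≤ a) (hb : 0 ≤ b) (hc : 0 ≤ c) : min (a + b) c ≤ min a c + min b c := by
  rcases le_total a c with hac | hca
  · rcases le_total b c with hbc | hcb
    · rw [min_eq_left hac, min_eq_left hbc]
      exact min_le_left _ _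
    · rw [min_eq_right hcb]
      exact (min_le_right _ _).trans (le_add_of_nonneg_left (le_min ha hc))
  · rw [min_eq_right hca]
    exact (min_le_right _ _).trans (le_add_of_nonneg_right (le_min hb hc))

lemma min_sum_le_sum_min [AddCommMonoid M] [IsOrderedAddMonoid M] {ι : Type*} {s : Finset ι}
    {f : ι → M} {c : M} (hf : ∀ i ∈ s, 0 ≤ f i) (hc : 0 ≤ c) :
    min (∑ i ∈ s, f i) c ≤ ∑ i ∈ s, min (f i) c :=
  Finset.le_sum_of_subadditive_on_pred (min · c) (0 ≤ ·) (min_le_left 0 c)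
    (fun _ _ ha hb => min_add_le_min_add_min ha hb hc) (fun _ _ => add_nonneg) f hf

lemma min_add_posPart_sub [AddCommGroup M] [IsOrderedAddMonoid M] (a b : M) :
    min a b + (a - b)⁺ = a := by
  rw [inf_eq_sub_posPart_sub, sub_add_cancel]

end Truncation

/-- The analogue of `Pbar` over an ordered semiring `𝕜`, for an arbitrary family `C` of finite
subsets of an arbitrary type `N`. -/
def coveringPolytope (𝕜 : Type*) [Semiring 𝕜] [Preorder 𝕜] {N : Type*} (C : Set (Finset N)) :
    Set ((N → 𝕜) × 𝕜) :=
  {p | (∀ j, p.1 j ∈ Set.Icc (0 : 𝕜) 1) ∧ p.2 ∈ Set.Icc (0 : 𝕜) 1 ∧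
    ∀ S ∈ C, p.2 ≤ ∑ j ∈ S, p.1 j}

namespace coveringPolytope

variable {𝕜 N : Type*} [Field 𝕜] [LinearOrder 𝕜] [IsStrictOrderedRing 𝕜]
  {C : Set (Finset N)} {x : N → 𝕜} {y : 𝕜}

lemma min_div_mem (h : (x, y) ∈ coveringPolytope 𝕜 C) (hy : 0 < y) :
    (fun j => min (x j) y / y, 1) ∈ coveringPolytope 𝕜 C := by
  obtain ⟨hx, -, hcover⟩ := h
  refine ⟨fun j => ⟨div_nonneg (le_min (hx j).1 hy.le) hy.le,
    div_le_one_of_le₀ (min_le_right _ _) hy.le⟩, ⟨zero_le_one, le_rfl⟩, fun S hS => ?_⟩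
  have hsum : y ≤ ∑ j ∈ S, min (x j) y :=
    calc y = min (∑ j ∈ S, x j) y := (min_eq_right (hcover S hS)).symm
      _ ≤ ∑ j ∈ S, min (x j) y := min_sum_le_sum_min (fun j _ => (hx j).1) hy.le
  rwa [← Finset.sum_div, one_le_div hy]

lemma posPart_sub_div_mem (hx : ∀ j, x j ≤ 1) (hy : y < 1) :
    (fun j => (x j - y)⁺ / (1 - y), 0) ∈ coveringPolytope 𝕜 C := by
  have hy' : 0 ≤ 1 - y := sub_nonneg.2 hy.le
  have hnonneg (j : N) : 0 ≤ (x j - y)⁺ / (1 - y) := div_nonneg (posPart_nonneg _) hy'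
  have hle (j : N) : (x j - y)⁺ / (1 - y) ≤ 1 :=
    div_le_one_of_le₀ (sup_le (sub_le_sub_right (hx j) y) hy') hy'
  exact ⟨fun j => ⟨hnonneg j, hle j⟩, ⟨le_rfl, zero_le_one⟩,
    fun S _ => Finset.sum_nonneg fun j _ => hnonneg j⟩

end coveringPolytope

lemma mem_openSegment_min_div_posPart_sub_div {𝕜 N : Type*} [Field 𝕜] [LinearOrder 𝕜]
    [IsStrictOrderedRing 𝕜] (x : N → 𝕜) {y : 𝕜} (hy₀ : 0 < y) (hy₁ : y < 1) :
    (x, y) ∈ openSegment 𝕜 (fun j => min (x j) y / y, (1 : 𝕜))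
      (fun j => (x j - y)⁺ / (1 - y), (0 : 𝕜)) := by
  have hy₁' : 0 < 1 - y := sub_pos.2 hy₁
  refine ⟨y, 1 - y, hy₀, hy₁', add_sub_cancel y 1, Prod.ext (funext fun j => ?_) (by simp)⟩
  calc y * (min (x j) y / y) + (1 - y) * ((x j - y)⁺ / (1 - y))
      = min (x j) y + (x j - y)⁺ := by
        rw [mul_div_cancel₀ _ hy₀.ne', mul_div_cancel₀ _ hy₁'.ne']
    _ = x j := min_add_posPart_sub (x j) y

theorem stmt_4_general {𝕜 N : Type*} [Field 𝕜] [LinearOrder 𝕜] [IsStrictOrderedRing 𝕜]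
    {C : Set (Finset N)} {p : (N → 𝕜) × 𝕜}
    (hp : p ∈ Set.extremePoints 𝕜 (coveringPolytope 𝕜 C)) : p.2 = 0 ∨ p.2 = 1 := by
  obtain ⟨x, y⟩ := p
  obtain ⟨hmem, hext⟩ := hp
  by_contra! hne
  have hpos : 0 < y := hmem.2.1.1.lt_of_ne' hne.1
  have hlt : y < 1 := hmem.2.1.2.lt_of_ne hne.2
  have heq := hext (coveringPolytope.min_div_mem hmem hpos)
    (coveringPolytope.posPart_sub_div_mem (fun j => (hmem.1 j).2) hlt)
    (mem_openSegment_min_div_posPart_sub_div x hpos hlt)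
  exact hne.2 (congrArg Prod.snd heq).symm

/-- Lemma 2 of the paper.
If `(x*, y*)` is an extreme point of `P̄(C)`, then `y* ∈ {0, 1}`. -/
theorem stmt_4 {N : Type*} [Fintype N] (C : Finset (Finset N))
    (p : (N → ℝ) × ℝ) (hp : p ∈ Set.extremePoints ℝ (Pbar C)) :
    p.2 = 0 ∨ p.2 = 1 :=
  stmt_4_general (C := (C : Set (Finset N))) hp
end

section
/- Let n be a positive integer and let C be a finite family of subsets of {1,…,n} such that every S ∈ C is an interval, i.e., a set of consecutive integers. Then the polytope P̄(C) = {(x,y) ∈ [0,1]^n × [0,1] : ∑_{j∈S} x_j ≥ y for every S ∈ C} is integral: every extreme point of P̄(C) lies in {0,1}^n × {0,1}. -/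
/-!
An extreme point `(x, y)` admits no nonzero direction keeping every tight constraint tight.
If `y < 1`, the point `(x, y)` itself, with the coordinates `x_j = 1` replaced by `0`, is such a
direction, because a tight `S ∈ C` contains no `j` with `x_j = 1`; hence it vanishes. If `y = 1`,
view the ground set as the arcs of a directed forest in which every `S ∈ C` is a path, and write `x`
as the potential difference of some `X` on the vertices. A tight constraint says that `X` increases
by an integer along an arc or a path, so the fractional part of `X` is the same at both ends, and
the potential difference of this fractional part is such a direction. Hence it vanishes, and `X`
increases by an integer along every arc. The intervals of `{1,…,n}` are paths in the digraph
`0 → 1 → ⋯ → n`.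
-/

open Filter Topology

section Perturbation

variable {𝕜 E : Type*} [Field 𝕜] [LinearOrder 𝕜] [IsStrictOrderedRing 𝕜] [TopologicalSpace 𝕜]
  [OrderTopology 𝕜] [AddCommGroup E] [Module 𝕜 E]

lemma eventually_add_mul_le_add_mul {a b u v : 𝕜} (hab : a ≤ b) (huv : a = b → u = v) :
    ∀ᶠ ε in 𝓝 (0 : 𝕜), a + ε * u ≤ b + ε * v := by
  rcases hab.eq_or_lt with rfl | hlt
  · simp [huv rfl]
  · have hu : Tendsto (fun ε : 𝕜 => a + ε * u) (𝓝 0) (𝓝 a) :=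
      Continuous.tendsto' (by fun_prop) _ _ (by simp)
    have hv : Tendsto (fun ε : 𝕜 => b + ε * v) (𝓝 0) (𝓝 b) :=
      Continuous.tendsto' (by fun_prop) _ _ (by simp)
    exact (hu.eventually_lt hv hlt).mono fun _ => le_of_lt

lemma eventually_add_mul_mem_Icc {a b t u : 𝕜} (ht : t ∈ Set.Icc a b)
    (hu : t = a ∨ t = b → u = 0) : ∀ᶠ ε in 𝓝 (0 : 𝕜), t + ε * u ∈ Set.Icc a b := by
  have hlower := eventually_add_mul_le_add_mul (u := 0) ht.1 fun h => (hu (.inl h.symm)).symm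
  have hupper := eventually_add_mul_le_add_mul (v := 0) ht.2 fun h => hu (.inr h)
  filter_upwards [hlower, hupper] with ε hle hge
  exact ⟨by simpa using hle, by simpa using hge⟩

lemma eq_zero_of_mem_extremePoints_of_eventually {A : Set E} {p d : E}
    (hp : p ∈ A.extremePoints 𝕜) (hd : ∀ᶠ ε in 𝓝 (0 : 𝕜), p + ε • d ∈ A) : d = 0 := by
  have hneg : ∀ᶠ ε in 𝓝 (0 : 𝕜), p + (-ε) • d ∈ A :=
    (continuous_neg.tendsto' (0 : 𝕜) 0 neg_zero).eventually hd
  obtain ⟨ε, ⟨hadd, hsub⟩, hε⟩ :=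
    (((hd.and hneg).filter_mono nhdsWithin_le_nhds).and
      (self_mem_nhdsWithin (a := (0 : 𝕜)) (s := Set.Ioi 0))).exists
  have hmid : p ∈ openSegment 𝕜 (p + ε • d) (p + (-ε) • d) :=
    ⟨1 / 2, 1 / 2, by norm_num, by norm_num, by norm_num, by module⟩
  have hfix : p + ε • d = p := hp.2 hadd hsub hmid
  exact (smul_eq_zero.1 (add_eq_left.1 hfix)).resolve_left (ne_of_gt hε)

end Perturbation

namespace Pbar

variable {N : Type*} [Fintype N] {C : Finset (Finset N)} {p : (N → ℝ) × ℝ}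

lemma eventually_add_smul_mem {d : (N → ℝ) × ℝ} (hp : p ∈ Pbar C)
    (hx : ∀ j, p.1 j = 0 ∨ p.1 j = 1 → d.1 j = 0) (hy : p.2 = 0 ∨ p.2 = 1 → d.2 = 0)
    (hC : ∀ S ∈ C, p.2 = ∑ j ∈ S, p.1 j → d.2 = ∑ j ∈ S, d.1 j) :
    ∀ᶠ ε in 𝓝 (0 : ℝ), p + ε • d ∈ Pbar C := by
  obtain ⟨hpx, hpy, hpC⟩ := hp
  have hcoord := eventually_all.2 fun j => eventually_add_mul_mem_Icc (hpx j) (hx j)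
  have hcover := (Finset.eventually_all C).2 fun S hS =>
    eventually_add_mul_le_add_mul (hpC S hS) (hC S hS)
  filter_upwards [hcoord, eventually_add_mul_mem_Icc hpy hy, hcover] with ε hεx hεy hεC
  refine ⟨hεx, hεy, fun S hS => ?_⟩
  simpa [Finset.sum_add_distrib, Finset.mul_sum] using hεC S hS

lemma forall_eq_zero_or_one_and_snd_eq_zero (hp : p ∈ (Pbar C).extremePoints ℝ)
    (hy : p.2 ≠ 1) : (∀ j, p.1 j = 0 ∨ p.1 j = 1) ∧ p.2 = 0 := by
  obtain ⟨hpx, hpy, -⟩ := hp.1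
  have hd : (({j | p.1 j ≠ 1}.indicator p.1, p.2) : (N → ℝ) × ℝ) = 0 := by
    refine eq_zero_of_mem_extremePoints_of_eventually hp
      (eventually_add_smul_mem hp.1 ?_ (fun h => h.resolve_right hy) fun S _ htight => ?_)
    · rintro j (hj | hj) <;> simp [hj]
    · have hlt : ∀ j ∈ S, p.1 j < 1 := fun j hj =>
        calc p.1 j ≤ ∑ i ∈ S, p.1 i := Finset.single_le_sum (fun i _ => (hpx i).1) hj
          _ = p.2 := htight.symm
          _ < 1 := hpy.2.lt_of_ne hy
      exact htight.trans (Finset.sum_congr rfl fun j hj =>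
        (Set.indicator_of_mem (hlt j hj).ne p.1).symm)
  obtain ⟨hdx, hdy⟩ := Prod.mk_eq_zero.1 hd
  refine ⟨fun j => ?_, hdy⟩
  by_contra! hj
  exact hj.1 (Set.indicator_apply_eq_zero.1 (congrFun hdx j) hj.2)

end Pbar

section Digraph

variable {N V : Type*}

/-- The potential difference of `X` along each arc of a digraph with vertex set `V` and arc set `N`,
given by the source map `s` and the target map `t`. As a function of `X` it is surjective exactly
when the underlying undirected multigraph is a forest. -/
def potentialDiff (s t : N → V) (X : V → ℝ) (j : N) : ℝ :=
  X (t j) - X (s j)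

/-- The indicator of the arc set `S` is a unit flow from some vertex `a` to some vertex `b`,
expressed by pairing it with potentials. In a directed forest, these are exactly the arc sets of
directed paths, with the empty one arising for `a = b`. -/
def IsUnitFlow (s t : N → V) (S : Finset N) : Prop :=
  ∃ a b, ∀ X : V → ℝ, ∑ j ∈ S, potentialDiff s t X j = X b - X a

lemma potentialDiff_fract_eq_zero_iff {s t : N → V} {X : V → ℝ} {j : N} :
    potentialDiff s t (Int.fract ∘ X) j = 0 ↔ ∃ z : ℤ, potentialDiff s t X j = z :=
  sub_eq_zero.trans Int.fract_eq_fract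

lemma IsUnitFlow.sum_potentialDiff_fract_eq_zero {s t : N → V} {S : Finset N} {X : V → ℝ} {z : ℤ}
    (hS : IsUnitFlow s t S) (hX : ∑ j ∈ S, potentialDiff s t X j = z) :
    ∑ j ∈ S, potentialDiff s t (Int.fract ∘ X) j = 0 := by
  obtain ⟨a, b, hab⟩ := hS
  rw [hab] at hX ⊢
  exact sub_eq_zero.2 (Int.fract_eq_fract.2 ⟨z, hX⟩)

end Digraph

lemma Pbar.forall_eq_zero_or_one_of_snd_eq_one {N V : Type*} [Fintype N] {s t : N → V}
    {C : Finset (Finset N)} {p : (N → ℝ) × ℝ} (hforest : (potentialDiff s t).Surjective)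
    (hC : ∀ S ∈ C, IsUnitFlow s t S) (hp : p ∈ (Pbar C).extremePoints ℝ) (hy : p.2 = 1) :
    ∀ j, p.1 j = 0 ∨ p.1 j = 1 := by
  intro j
  obtain ⟨X, hX⟩ := hforest p.1
  have hd : ((potentialDiff s t (Int.fract ∘ X), 0) : (N → ℝ) × ℝ) = 0 := by
    refine eq_zero_of_mem_extremePoints_of_eventually hp
      (eventually_add_smul_mem hp.1 (fun i hi => ?_) (fun _ => rfl) fun S hS htight => ?_)
    · refine potentialDiff_fract_eq_zero_iff.2 ?_
      rw [hX]
      exact hi.elim (fun h => ⟨0, by simp [h]⟩) fun h => ⟨1, by simp [h]⟩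
    · refine ((hC S hS).sum_potentialDiff_fract_eq_zero (z := 1) ?_).symm
      rw [hX, ← htight, hy, Int.cast_one]
  obtain ⟨z, hz⟩ := potentialDiff_fract_eq_zero_iff.1 (congrFun (Prod.mk_eq_zero.1 hd).1 j)
  obtain ⟨h₀, h₁⟩ := hp.1.1 j
  rw [← hX, hz] at h₀ h₁ ⊢
  norm_cast at h₀ h₁ ⊢
  lia

theorem stmt_6_general {N V : Type*} [Fintype N] {s t : N → V} {C : Finset (Finset N)}
    (hforest : (potentialDiff s t).Surjective) (hC : ∀ S ∈ C, IsUnitFlow s t S)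
    {p : (N → ℝ) × ℝ} (hp : p ∈ (Pbar C).extremePoints ℝ) :
    (∀ j, p.1 j = 0 ∨ p.1 j = 1) ∧ (p.2 = 0 ∨ p.2 = 1) := by
  by_cases hy : p.2 = 1
  · exact ⟨Pbar.forall_eq_zero_or_one_of_snd_eq_one hforest hC hp hy, .inr hy⟩
  · exact (Pbar.forall_eq_zero_or_one_and_snd_eq_zero hp hy).imp_right .inl

section Interval

lemma eq_Icc_min'_max'_of_ordConnected {α : Type*} [LinearOrder α] [LocallyFiniteOrder α]
    {S : Finset α} (hS : (S : Set α).OrdConnected) (hne : S.Nonempty) :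
    S = Finset.Icc (S.min' hne) (S.max' hne) := by
  refine Finset.Subset.antisymm
    (fun j hj => Finset.mem_Icc.2 ⟨S.min'_le j hj, S.le_max' j hj⟩) fun j hj => ?_
  exact hS.out (S.min'_mem hne) (S.max'_mem hne) (Finset.mem_Icc.1 hj)

variable {n : ℕ}

lemma potentialDiff_val_surjective :
    (potentialDiff Fin.val fun j : Fin n => j.val + 1).Surjective := fun x =>
  ⟨fun k => ∑ i ∈ Finset.range k, Function.extend Fin.val x 0 i, funext fun j => by
    simp [potentialDiff, Finset.sum_range_succ, Fin.val_injective.extend_apply]⟩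

lemma isUnitFlow_val_of_ordConnected {S : Finset (Fin n)} (hS : (S : Set (Fin n)).OrdConnected) :
    IsUnitFlow Fin.val (fun j => j.val + 1) S := by
  rcases S.eq_empty_or_nonempty with rfl | hne
  · exact ⟨0, 0, by simp⟩
  · refine ⟨S.min' hne, S.max' hne + 1, fun X => ?_⟩
    have hle : (S.min' hne : ℕ) ≤ S.max' hne := S.min'_le _ (S.max'_mem hne)
    calc ∑ j ∈ S, (X (j + 1) - X j)
        = ∑ k ∈ S.map Fin.valEmbedding, (X (k + 1) - X k) := by simp [Finset.sum_map]
      _ = ∑ k ∈ Finset.Icc (S.min' hne : ℕ) (S.max' hne), (X (k + 1) - X k) := by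
          rw [← Fin.map_valEmbedding_Icc, ← eq_Icc_min'_max'_of_ordConnected hS hne]
      _ = X (S.max' hne + 1) - X (S.min' hne) := Finset.sum_Icc_sub hle X

end Interval

/-- Proposition 2 of the paper.
Let `C` be a finite family of subsets of `{1,…,n}` (modelled as `Fin n`) each of which is
an interval, i.e., a set of consecutive integers. Then the polytope `P̄(C)` is integral:
every extreme point lies in `{0,1}^n × {0,1}`. -/
theorem stmt_6 (n : ℕ) (hn : 0 < n) (C : Finset (Finset (Fin n)))
    (hC : ∀ S ∈ C, ∀ a ∈ S, ∀ b ∈ S, ∀ c : Fin n, a ≤ c → c ≤ b → c ∈ S)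
    (p : (Fin n → ℝ) × ℝ) (hp : p ∈ Set.extremePoints ℝ (Pbar C)) :
    (∀ j, p.1 j = 0 ∨ p.1 j = 1) ∧ (p.2 = 0 ∨ p.2 = 1) :=
  stmt_6_general potentialDiff_val_surjective (fun S hS => isUnitFlow_val_of_ordConnected
    ⟨fun a ha b hb c hc => hC S hS a ha b hb c hc.1 hc.2⟩) hp
end

section
/- Let N be a finite set, R a finite nonempty index set, for each r ∈ R let C_r be a finite family of subsets of N, let 𝒜 = {⋃_{r∈R} S_r : S_r ∈ C_r for each r ∈ R}, and fix f > 0. For x ∈ [0,1]^N define v^agg(x) = sup{ f·y : y ∈ [0,1], ∑_{j∈S} x_j ≥ y for every S ∈ 𝒜 } and v^disagg(x) = sup{ f·∑_{r∈R} z_r : z ∈ [0,1]^R, ∑_{r∈R} z_r ≤ 1, ∑_{j∈S} x_j ≥ z_r for every r ∈ R and every S ∈ C_r }. Then v^agg(x) ≤ v^disagg(x) for every x ∈ [0,1]^N. -/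
/-- The aggregated family `𝒜 = {⋃_{r∈R} S_r : S_r ∈ C_r for each r ∈ R}`. -/
def aggFamily {N R : Type*} [DecidableEq N] [Fintype R]
    (C : R → Finset (Finset N)) : Set (Finset N) :=
  {A | ∃ g : R → Finset N, (∀ r, g r ∈ C r) ∧ A = Finset.univ.sup g}

/-- `v^disagg(x) = sup{ f·∑_r z_r : z ∈ [0,1]^R, ∑_r z_r ≤ 1,
`∑_{j∈S} x_j ≥ z_r` for every `r ∈ R` and `S ∈ C_r }`. -/
noncomputable def vdisagg {N R : Type*} [Fintype R]
    (C : R → Finset (Finset N)) (f : ℝ) (x : N → ℝ) : ℝ :=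
  sSup {t | ∃ z : R → ℝ,
    (∀ r, z r ∈ Set.Icc (0 : ℝ) 1) ∧ (∑ r, z r) ≤ 1 ∧
    (∀ r, ∀ S ∈ C r, z r ≤ ∑ j ∈ S, x j) ∧
    t = f * ∑ r, z r}

/-- `v^agg(x) = sup{ f·y : y ∈ [0,1], ∑_{j∈S} x_j ≥ y for every S ∈ 𝒜 }`. -/
noncomputable def vagg {N : Type*} (A : Set (Finset N)) (f : ℝ) (x : N → ℝ) : ℝ :=
  sSup {t | ∃ y : ℝ, y ∈ Set.Icc (0 : ℝ) 1 ∧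
    (∀ S ∈ A, y ≤ ∑ j ∈ S, x j) ∧ t = f * y}

/-!
Every feasible `y` of the aggregated program is the sum of a feasible `z` of the disaggregated one.
Let `c r` be the minimum of `1` and the weights `x(S)`, `S ∈ C r`. If some `c r` is `1`, then
`y ≤ 1 ≤ ∑ r, c r`; otherwise each `c r` is attained at some `S r ∈ C r`, and the union bound gives
`y ≤ x(⋃ r, S r) ≤ ∑ r, x(S r) = ∑ r, c r`. Scaling `c` down to total `y` produces `z`.
-/

lemma sum_biUnion_le_sum_sum {ι α M : Type*} [DecidableEq α] [AddCommMonoid M] [PartialOrder M]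
    [IsOrderedAddMonoid M] (s : Finset ι) (t : ι → Finset α) {w : α → M} (hw : ∀ a, 0 ≤ w a) :
    ∑ a ∈ s.biUnion t, w a ≤ ∑ i ∈ s, ∑ a ∈ t i, w a := by
  have biUnion_eq_image : s.biUnion t = (s.sigma t).image Sigma.snd := by
    ext a
    simp
  rw [biUnion_eq_image, ← Finset.sum_sigma s t fun p => w p.2]
  exact Finset.sum_image_le_of_nonneg fun a _ => hw a

lemma exists_mem_Icc_sum_eq {ι K : Type*} [Field K] [LinearOrder K] [IsStrictOrderedRing K]
    {s : Finset ι} {c : ι → K} (hc : ∀ i ∈ s, 0 ≤ c i) {y : K} (hy : 0 ≤ y)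
    (hyc : y ≤ ∑ i ∈ s, c i) :
    ∃ z : ι → K, (∀ i ∈ s, z i ∈ Set.Icc 0 (c i)) ∧ ∑ i ∈ s, z i = y := by
  have total_nonneg : 0 ≤ ∑ i ∈ s, c i := hy.trans hyc
  refine ⟨fun i => y / (∑ i ∈ s, c i) * c i, fun i hi => ⟨?_, ?_⟩, ?_⟩
  · exact mul_nonneg (div_nonneg hy total_nonneg) (hc i hi)
  · exact mul_le_of_le_one_left (hc i hi) (div_le_one_of_le₀ hyc total_nonneg)
  · rw [← Finset.mul_sum]
    exact div_mul_cancel_of_imp fun total_eq_zero => (hyc.trans_eq total_eq_zero).antisymm hy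

/-- The minimum of `1` and the weights `∑ j ∈ S, x j` of the members `S` of `C`: the largest value
`≤ 1` that the covering constraints of the family `C` allow. Starting the minimum at `1` makes it
meaningful for an empty family. -/
noncomputable def capacity {N : Type*} (C : Finset (Finset N)) (x : N → ℝ) : ℝ :=
  C.fold min 1 fun S => ∑ j ∈ S, x j

/-- The constraints of the aggregated program for the family `A` on its single variable `y`. -/
structure IsAggFeasible {N : Type*} (A : Set (Finset N)) (x : N → ℝ) (y : ℝ) : Prop where
  mem_Icc : y ∈ Set.Icc (0 : ℝ) 1
  le_weight : ∀ S ∈ A, y ≤ ∑ j ∈ S, x j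

/-- The constraints of the disaggregated program for the families `C r` on its variables `z r`. -/
structure IsDisaggFeasible {N R : Type*} [Fintype R] (C : R → Finset (Finset N)) (x : N → ℝ)
    (z : R → ℝ) : Prop where
  mem_Icc : ∀ r, z r ∈ Set.Icc (0 : ℝ) 1
  sum_le_one : ∑ r, z r ≤ 1
  le_weight : ∀ r, ∀ S ∈ C r, z r ≤ ∑ j ∈ S, x j

section

variable {N : Type*} {x : N → ℝ}

lemma le_capacity_iff {C : Finset (Finset N)} {t : ℝ} :
    t ≤ capacity C x ↔ t ≤ 1 ∧ ∀ S ∈ C, t ≤ ∑ j ∈ S, x j :=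
  Finset.le_fold_min t

lemma one_le_capacity_or_exists_weight_le (C : Finset (Finset N)) (x : N → ℝ) :
    1 ≤ capacity C x ∨ ∃ S ∈ C, ∑ j ∈ S, x j ≤ capacity C x :=
  (Finset.fold_min_le _).mp le_rfl

lemma capacity_nonneg (C : Finset (Finset N)) (hx : ∀ j, 0 ≤ x j) : 0 ≤ capacity C x :=
  le_capacity_iff.mpr ⟨zero_le_one, fun _ _ => Finset.sum_nonneg fun j _ => hx j⟩

variable {R : Type*} [Fintype R] {C : R → Finset (Finset N)}

lemma isAggFeasible_zero (A : Set (Finset N)) (hx : ∀ j, 0 ≤ x j) : IsAggFeasible A x 0 where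
  mem_Icc := ⟨le_rfl, zero_le_one⟩
  le_weight _ _ := Finset.sum_nonneg fun j _ => hx j

lemma isDisaggFeasible_of_le_capacity {z : R → ℝ} (hz : ∀ r, z r ∈ Set.Icc 0 (capacity (C r) x))
    (hsum : ∑ r, z r ≤ 1) : IsDisaggFeasible C x z where
  mem_Icc r := ⟨(hz r).1, (le_capacity_iff.mp (hz r).2).1⟩
  sum_le_one := hsum
  le_weight r := (le_capacity_iff.mp (hz r).2).2

lemma IsDisaggFeasible.mul_sum_le_abs {z : R → ℝ} (hz : IsDisaggFeasible C x z) (f : ℝ) :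
    f * ∑ r, z r ≤ |f| :=
  calc f * ∑ r, z r ≤ |f| * ∑ r, z r :=
        mul_le_mul_of_nonneg_right (le_abs_self f) (Finset.sum_nonneg fun r _ => (hz.mem_Icc r).1)
    _ ≤ |f| := mul_le_of_le_one_right (abs_nonneg f) hz.sum_le_one

variable [DecidableEq N] {y : ℝ}

lemma IsAggFeasible.le_sum_capacity (hy : IsAggFeasible (aggFamily C) x y) (hx : ∀ j, 0 ≤ x j) :
    y ≤ ∑ r, capacity (C r) x := by
  by_cases hcap : ∃ r, 1 ≤ capacity (C r) x
  · obtain ⟨r, hr⟩ := hcap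
    calc y ≤ 1 := hy.mem_Icc.2
      _ ≤ capacity (C r) x := hr
      _ ≤ ∑ r, capacity (C r) x :=
        Finset.single_le_sum (fun r _ => capacity_nonneg (C r) hx) (Finset.mem_univ r)
  · have attained (r : R) : ∃ S ∈ C r, ∑ j ∈ S, x j ≤ capacity (C r) x :=
      (one_le_capacity_or_exists_weight_le (C r) x).resolve_left fun hr => hcap ⟨r, hr⟩
    choose S hSC hS using attained
    calc y ≤ ∑ j ∈ Finset.univ.biUnion S, x j :=
          hy.le_weight _ ⟨S, hSC, (Finset.sup_eq_biUnion _ S).symm⟩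
      _ ≤ ∑ r, ∑ j ∈ S r, x j := sum_biUnion_le_sum_sum _ S hx
      _ ≤ ∑ r, capacity (C r) x := Finset.sum_le_sum fun r _ => hS r

lemma IsAggFeasible.exists_isDisaggFeasible_sum_eq (hy : IsAggFeasible (aggFamily C) x y)
    (hx : ∀ j, 0 ≤ x j) : ∃ z : R → ℝ, IsDisaggFeasible C x z ∧ ∑ r, z r = y := by
  obtain ⟨z, hz, hzy⟩ := exists_mem_Icc_sum_eq (fun r _ => capacity_nonneg (C r) hx)
    hy.mem_Icc.1 (hy.le_sum_capacity hx)
  exact ⟨z, isDisaggFeasible_of_le_capacity (fun r => hz r (Finset.mem_univ r))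
    (hzy.trans_le hy.mem_Icc.2), hzy⟩

end

theorem stmt_9_general {N R : Type*} [DecidableEq N] [Fintype R] (C : R → Finset (Finset N))
    (f : ℝ) (x : N → ℝ) (hx : ∀ j, 0 ≤ x j) : vagg (aggFamily C) f x ≤ vdisagg C f x := by
  have zero_feasible := isAggFeasible_zero (aggFamily C) hx
  refine csSup_le_csSup ⟨|f|, ?_⟩ ⟨_, 0, zero_feasible.mem_Icc, zero_feasible.le_weight, rfl⟩ ?_
  · rintro _ ⟨z, hz, hsum, hweight, rfl⟩
    exact IsDisaggFeasible.mul_sum_le_abs ⟨hz, hsum, hweight⟩ f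
  · rintro _ ⟨y, hy, hweight, rfl⟩
    obtain ⟨z, hz, rfl⟩ := IsAggFeasible.exists_isDisaggFeasible_sum_eq ⟨hy, hweight⟩ hx
    exact ⟨z, hz.mem_Icc, hz.sum_le_one, hz.le_weight, rfl⟩

/-- Proposition 3(i) of the paper.
For every `x ∈ [0,1]^N`, `v^agg(x) ≤ v^disagg(x)`. -/
theorem stmt_9 {N R : Type*} [Fintype N] [DecidableEq N] [Fintype R] [Nonempty R]
    (C : R → Finset (Finset N)) (f : ℝ) (hf : 0 < f)
    (x : N → ℝ) (hx : ∀ j, x j ∈ Set.Icc (0 : ℝ) 1) :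
    vagg (aggFamily C) f x ≤ vdisagg C f x :=
  stmt_9_general C f x fun j => (hx j).1
end

section
/- Let n be a positive integer. Let N = {1,…,2n}, R = {1,…,n}, and for each r ∈ R let C_r = { {1}, {r+1}, {n+2}, {n+3}, …, {2n} } (a family of singletons). Let 𝒜 = {⋃_{r∈R} S_r : S_r ∈ C_r for each r ∈ R}. Fix f > 0 and define v^agg(x) = sup{ f·y : y ∈ [0,1], ∑_{j∈S} x_j ≥ y for every S ∈ 𝒜 }. Then for every x ∈ [0,1]^{2n} with ∑_{j=1}^{2n} x_j ≤ 2, one has v^agg(x) ≤ 2f/(n+1). -/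
/-- The instance of Proposition 4(i): nodes `N = {1,…,2n}` (labelled by naturals),
demands indexed by `r ∈ R = {1,…,n}` (modelled as `Fin n`, with `r ↦ r.val + 1`), and
`C_r = { {1}, {r+1}, {n+2}, {n+3}, …, {2n} }`, a family of singletons. -/
def C1 (n : ℕ) : Fin n → Finset (Finset ℕ) := fun r =>
  insert {1} (insert {(r : ℕ) + 2}
    ((Finset.Icc (n + 2) (2 * n)).image fun k => ({k} : Finset ℕ)))

/-!
If `y` is feasible, every member of the family has weight at least `y`, so `k` disjoint members
covering the nodes force `k * y ≤ ∑ j, x j`. For `C1 n` the `2 n` nodes are partitioned by `n + 1`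
members of the aggregated family: the `n` singletons common to all `C_r`, obtained by choosing the
same set for every `r`, and `{2, …, n + 1}`, obtained by choosing `{r + 1}` for each `r`.
-/

theorem card_nsmul_le_sum_biUnion_of_pairwiseDisjoint {N ι M : Type*} [DecidableEq N]
    [AddCommMonoid M] [PartialOrder M] [IsOrderedAddMonoid M] {x : N → M} {y : M}
    {I : Finset ι} {S : ι → Finset N} (hdisj : (I : Set ι).PairwiseDisjoint S)
    (hy : ∀ i ∈ I, y ≤ ∑ j ∈ S i, x j) : I.card • y ≤ ∑ j ∈ I.biUnion S, x j := by
  rw [Finset.sum_biUnion hdisj]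
  exact Finset.card_nsmul_le_sum I _ y hy

section UpperBound

variable {N : Type*} {A : Set (Finset N)} {x : N → ℝ}

-- For an infeasible `x` the value is `vagg A f x = sSup ∅ = 0`.
theorem vagg_le_mul {f c : ℝ} (hf : 0 ≤ f) (hc : 0 ≤ c)
    (h : ∀ y ∈ Set.Icc (0 : ℝ) 1, (∀ S ∈ A, y ≤ ∑ j ∈ S, x j) → y ≤ c) : vagg A f x ≤ f * c := by
  refine Real.sSup_le ?_ (mul_nonneg hf hc)
  rintro _ ⟨y, hy01, hy, rfl⟩
  exact mul_le_mul_of_nonneg_left (h y hy01 hy) hf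

theorem vagg_le_mul_div_card_of_pairwiseDisjoint [DecidableEq N] {ι : Type*} {I : Finset ι}
    {S : ι → Finset N} {f B : ℝ} (hf : 0 ≤ f) (hB : 0 ≤ B) (hI : I.Nonempty)
    (hdisj : (I : Set ι).PairwiseDisjoint S) (hS : ∀ i ∈ I, S i ∈ A)
    (hb : ∑ j ∈ I.biUnion S, x j ≤ B) : vagg A f x ≤ f * (B / I.card) := by
  refine vagg_le_mul hf (by positivity) fun y _ hy => ?_
  rw [le_div_iff₀' (Nat.cast_pos.2 hI.card_pos), ← nsmul_eq_mul]
  exact (card_nsmul_le_sum_biUnion_of_pairwiseDisjoint hdisj fun i hi => hy _ (hS i hi)).trans hb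

end UpperBound

theorem mem_aggFamily_of_forall_mem {N R : Type*} [DecidableEq N] [Fintype R] [Nonempty R]
    {C : R → Finset (Finset N)} {S : Finset N} (hS : ∀ r, S ∈ C r) : S ∈ aggFamily C :=
  ⟨fun _ => S, hS, (Finset.sup_const Finset.univ_nonempty S).symm⟩

namespace C1

/-- The partition of the nodes `{1, …, 2 n}` into members of `aggFamily (C1 n)`. Each block is
indexed by its largest node, an element of `C1.blockMaxima n`. -/
def block (n j : ℕ) : Finset ℕ :=
  if j = n + 1 then Finset.Icc 2 (n + 1) else {j}

/-- The largest nodes of the blocks `{1}`, `{2, …, n + 1}`, `{n + 2}`, …, `{2 n}`; they index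
the partition `C1.block n`. -/
def blockMaxima (n : ℕ) : Finset ℕ :=
  insert 1 (Finset.Icc (n + 1) (2 * n))

variable {n : ℕ}

theorem blockMaxima_nonempty (n : ℕ) : (blockMaxima n).Nonempty :=
  Finset.insert_nonempty _ _

theorem card_blockMaxima (hn : 0 < n) : (blockMaxima n).card = n + 1 := by
  rw [blockMaxima, Finset.card_insert_of_notMem (by simp [hn.ne']), Nat.card_Icc]
  omega

theorem mem_block {a j : ℕ} :
    a ∈ block n j ↔ j = n + 1 ∧ 2 ≤ a ∧ a ≤ n + 1 ∨ j ≠ n + 1 ∧ a = j := by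
  by_cases hj : j = n + 1 <;> simp [block, hj]

theorem pairwiseDisjoint_block : (blockMaxima n : Set ℕ).PairwiseDisjoint (block n) := by
  intro i hi j hj hij
  simp only [blockMaxima, Finset.mem_coe, Finset.mem_insert, Finset.mem_Icc] at hi hj
  refine Finset.disjoint_left.2 fun a hai haj => ?_
  rw [mem_block] at hai haj
  omega

theorem biUnion_block (hn : 0 < n) :
    (blockMaxima n).biUnion (block n) = Finset.Icc 1 (2 * n) := by
  ext a
  simp only [blockMaxima, Finset.mem_biUnion, Finset.mem_insert, Finset.mem_Icc, mem_block]
  constructor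
  · rintro ⟨j, hj, ha⟩
    omega
  · intro ha
    by_cases hmid : 2 ≤ a ∧ a ≤ n + 1
    · exact ⟨n + 1, by omega⟩
    · exact ⟨a, by omega⟩

theorem Icc_mem_aggFamily (n : ℕ) : Finset.Icc 2 (n + 1) ∈ aggFamily (C1 n) := by
  refine ⟨fun r => {(r : ℕ) + 2}, fun r => by simp [C1], ?_⟩
  ext a
  simp only [Finset.mem_Icc, Finset.mem_sup, Finset.mem_univ, true_and, Finset.mem_singleton]
  exact ⟨fun ha => ⟨⟨a - 2, by omega⟩, by grind⟩, fun ⟨r, hr⟩ => by omega⟩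

theorem singleton_mem {j : ℕ} (hj : j = 1 ∨ j ∈ Finset.Icc (n + 2) (2 * n)) (r : Fin n) :
    {j} ∈ C1 n r := by
  simp only [C1, Finset.mem_insert, Finset.mem_image]
  rcases hj with rfl | hj
  · exact .inl rfl
  · exact .inr (.inr ⟨j, hj, rfl⟩)

theorem block_mem_aggFamily (hn : 0 < n) {j : ℕ} (hj : j ∈ blockMaxima n) :
    block n j ∈ aggFamily (C1 n) := by
  have : Nonempty (Fin n) := ⟨⟨0, hn⟩⟩
  rw [block]
  split_ifs with hmid
  · exact Icc_mem_aggFamily n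
  · refine mem_aggFamily_of_forall_mem (singleton_mem ?_)
    simp only [blockMaxima, Finset.mem_insert, Finset.mem_Icc] at hj ⊢
    omega

end C1

theorem stmt_15_general {n : ℕ} (hn : 0 < n) {f B : ℝ} (hf : 0 ≤ f) (hB : 0 ≤ B) {x : ℕ → ℝ}
    (hb : ∑ j ∈ Finset.Icc 1 (2 * n), x j ≤ B) :
    vagg (aggFamily (C1 n)) f x ≤ B * f / ((n : ℝ) + 1) := by
  have h := vagg_le_mul_div_card_of_pairwiseDisjoint hf hB (C1.blockMaxima_nonempty n)
    C1.pairwiseDisjoint_block (fun _ => C1.block_mem_aggFamily hn)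
    (by rwa [C1.biUnion_block hn])
  rw [C1.card_blockMaxima hn, Nat.cast_add_one] at h
  rwa [mul_comm B, mul_div_assoc]

/-- upper bound in the proof of Proposition 4(i) of the paper.
On the instance `C1 n`, every `x ∈ [0,1]^{2n}` with `∑_{j=1}^{2n} x_j ≤ 2` satisfies
`v^agg(x) ≤ 2f/(n+1)`. -/
theorem stmt_15 (n : ℕ) (hn : 0 < n) (f : ℝ) (hf : 0 < f) (x : ℕ → ℝ)
    (hx : ∀ j ∈ Finset.Icc 1 (2 * n), x j ∈ Set.Icc (0 : ℝ) 1)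
    (hb : (∑ j ∈ Finset.Icc 1 (2 * n), x j) ≤ 2) :
    vagg (aggFamily (C1 n)) f x ≤ 2 * f / ((n : ℝ) + 1) :=
  stmt_15_general hn hf.le zero_le_two hb
end

section
/- Let γ > 1 be a real number and let n be an integer with n ≥ max(6γ, 2). Set m = 2n+4 and let 𝒜 = { {1}, {2}, {2n+3}, {2n+4} } ∪ { S ⊆ {3,…,2n+2} : |S| = n }. Fix f > 0, define v^agg(x) = max{ f·y : y ∈ [0,1], ∑_{j∈S} x_j ≥ y for every S ∈ 𝒜 } for x ∈ [0,1]^m, and let g be the concavification of the restriction of v^agg to {0,1}^m, i.e., g(x) = max{ ∑_{β∈{0,1}^m} α_β v^agg(β) : α_β ≥ 0, ∑_β α_β = 1, ∑_β α_β β = x }. With X̄ = { x ∈ [0,1]^m : ∑_{j=1}^{m} x_j ≤ 6 }, it holds that γ · sup_{x∈X̄} g(x) ≤ sup_{x∈X̄} v^agg(x). -/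
/-- The indicator vector (in `{0,1}^ℕ`) of a finite set `T` of node labels. -/
def indVec (T : Finset ℕ) : ℕ → ℝ := fun j => if j ∈ T then 1 else 0

/-- The concavification of `h : {0,1}^m → ℝ`, where binary vectors on the node set
`{1,…,m}` are identified with subsets `T ⊆ {1,…,m}`:
`g(x) = max{ ∑_β α_β h(β) : α ≥ 0, ∑_β α_β = 1, ∑_β α_β β = x }`. -/
noncomputable def concavifyN (m : ℕ) (h : Finset ℕ → ℝ) (x : ℕ → ℝ) : ℝ :=
  sSup {t | ∃ α : Finset ℕ → ℝ,
    (∀ T ∈ (Finset.Icc 1 m).powerset, 0 ≤ α T) ∧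
    (∑ T ∈ (Finset.Icc 1 m).powerset, α T) = 1 ∧
    (∀ j ∈ Finset.Icc 1 m, (∑ T ∈ (Finset.Icc 1 m).powerset, α T * indVec T j) = x j) ∧
    t = ∑ T ∈ (Finset.Icc 1 m).powerset, α T * h T}

/-- The family of Proposition 4(ii): on the nodes `{1,…,2n+4}` (labelled by naturals),
`𝒜 = { {1}, {2}, {2n+3}, {2n+4} } ∪ { S ⊆ {3,…,2n+2} : |S| = n }`. -/
def A2 (n : ℕ) : Set (Finset ℕ) :=
  ({ {1}, {2}, {2 * n + 3}, {2 * n + 4} } : Set (Finset ℕ)) ∪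
    {S : Finset ℕ | S ⊆ Finset.Icc 3 (2 * n + 2) ∧ S.card = n}

/-!
On a binary point `indVec T` the value of `vagg A f` is `f` if `T` meets every member of `A` and `0`
otherwise, so the concave relaxation has to pay for integral hitting sets, while the aggregated LP
only pays for fractional ones. A hitting set of `A2 n` has more than `n` nodes, since it meets all
`n`-subsets of the `2n` middle nodes; hence `vagg (A2 n) f (indVec T) ≤ (f / n) * |T|`, and the
concavification stays below the linear function `(f / n) * ∑ x_j`, which is at most `6 f / n` under
the budget. Fractionally, weight `1` on the four singleton nodes and `1 / n` on each middle node
covers every member of `A2 n` at total cost `4 + 2n / n = 6`, so the LP bound is `f`.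
-/

/-- Integral hitting sets (transversals) of a family of finite sets, the solutions that support a
positive `vagg` at a binary point. -/
def IsHittingSet {N : Type*} (A : Set (Finset N)) (T : Finset N) : Prop :=
  ∀ S ∈ A, ¬ Disjoint S T

/-- The optimal value of a relaxation: the supremum of the objective `F` over the points of
`[0,1]^m` with total weight at most the budget `b`, the coordinates being labelled `1, …, m`. -/
noncomputable def budgetSup (m : ℕ) (b : ℝ) (F : (ℕ → ℝ) → ℝ) : ℝ :=
  sSup {t | ∃ x : ℕ → ℝ, (∀ j ∈ Finset.Icc 1 m, x j ∈ Set.Icc (0 : ℝ) 1) ∧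
    (∑ j ∈ Finset.Icc 1 m, x j) ≤ b ∧ t = F x}

/-- The fractional hitting set of `A2 n`: weight `1 / n` on the middle nodes and `1` on the nodes
of the four singletons. -/
noncomputable def fractionalHit (n : ℕ) (j : ℕ) : ℝ :=
  if j ∈ Finset.Icc 3 (2 * n + 2) then 1 / n else 1

section vagg

variable {N : Type*} {A : Set (Finset N)} {f : ℝ}

theorem vagg_le (hf : 0 ≤ f) (x : N → ℝ) : vagg A f x ≤ f := by
  refine Real.sSup_le ?_ hf
  rintro _ ⟨y, hy, -, rfl⟩
  exact mul_le_of_le_one_right hf hy.2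

theorem vagg_eq_of_one_le_sum (hf : 0 ≤ f) {x : N → ℝ} (hx : ∀ S ∈ A, 1 ≤ ∑ j ∈ S, x j) :
    vagg A f x = f := by
  refine (vagg_le hf x).antisymm (le_csSup ⟨f, ?_⟩ ⟨1, by simp, hx, (mul_one f).symm⟩)
  rintro _ ⟨y, hy, -, rfl⟩
  exact mul_le_of_le_one_right hf hy.2

theorem vagg_eq_zero_of_sum_nonpos {x : N → ℝ} {S : Finset N} (hS : S ∈ A)
    (hx : ∑ j ∈ S, x j ≤ 0) : vagg A f x = 0 := by
  refine le_antisymm (Real.sSup_nonpos ?_) (Real.sSup_nonneg ?_) <;>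
  · rintro _ ⟨y, hy, hyA, rfl⟩
    rw [((hyA S hS).trans hx).antisymm hy.1, mul_zero]

end vagg

theorem sum_indVec (S T : Finset ℕ) : ∑ j ∈ S, indVec T j = ((S ∩ T).card : ℝ) := by
  simp [indVec, Finset.sum_ite_mem]

theorem vagg_indVec_le_mul_card {A : Set (Finset ℕ)} {f : ℝ} {k : ℕ} {T : Finset ℕ}
    (hf : 0 ≤ f) (hk : 0 < k) (hT : IsHittingSet A T → k ≤ T.card) :
    vagg A f (indVec T) ≤ f / k * T.card := by
  by_cases hit : IsHittingSet A T
  · have one_le_ratio : (1 : ℝ) ≤ T.card / k := by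
      rw [one_le_div (by exact_mod_cast hk)]
      exact_mod_cast hT hit
    calc vagg A f (indVec T) ≤ f := vagg_le hf _
      _ ≤ f * (T.card / k) := le_mul_of_one_le_right hf one_le_ratio
      _ = f / k * T.card := by ring
  · obtain ⟨S, hS, hST⟩ : ∃ S ∈ A, Disjoint S T := by
      simpa only [IsHittingSet, not_forall, not_not, exists_prop] using hit
    have sum_eq_zero : ∑ j ∈ S, indVec T j = 0 := by
      rw [sum_indVec, Finset.disjoint_iff_inter_eq_empty.mp hST, Finset.card_empty, Nat.cast_zero]
    rw [vagg_eq_zero_of_sum_nonpos hS sum_eq_zero.le]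
    positivity

-- `hx` covers the points that are not convex combinations of binary ones, where the `sSup` is `0`.
theorem concavifyN_le_of_affine_majorant {m : ℕ} {h : Finset ℕ → ℝ} {x w : ℕ → ℝ} {c : ℝ}
    (hw : ∀ T ⊆ Finset.Icc 1 m, h T ≤ c + ∑ j ∈ Finset.Icc 1 m, w j * indVec T j)
    (hx : 0 ≤ c + ∑ j ∈ Finset.Icc 1 m, w j * x j) :
    concavifyN m h x ≤ c + ∑ j ∈ Finset.Icc 1 m, w j * x j := by
  refine Real.sSup_le ?_ hx
  rintro _ ⟨α, α_nonneg, sum_α, α_bary, rfl⟩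
  calc ∑ T ∈ (Finset.Icc 1 m).powerset, α T * h T
      ≤ ∑ T ∈ (Finset.Icc 1 m).powerset,
          α T * (c + ∑ j ∈ Finset.Icc 1 m, w j * indVec T j) :=
        Finset.sum_le_sum fun T hT =>
          mul_le_mul_of_nonneg_left (hw T (Finset.mem_powerset.mp hT)) (α_nonneg T hT)
    _ = (∑ T ∈ (Finset.Icc 1 m).powerset, α T) * c +
          ∑ j ∈ Finset.Icc 1 m, w j * ∑ T ∈ (Finset.Icc 1 m).powerset, α T * indVec T j := by
        simp only [mul_add, Finset.sum_add_distrib, Finset.sum_mul, Finset.mul_sum,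
          mul_left_comm (α _)]
        rw [Finset.sum_comm]
    _ = c + ∑ j ∈ Finset.Icc 1 m, w j * x j := by
        rw [sum_α, one_mul, Finset.sum_congr rfl fun j hj => by rw [α_bary j hj]]

section budgetSup

variable {m : ℕ} {b : ℝ}

theorem budgetSup_le {F : (ℕ → ℝ) → ℝ} {C : ℝ} (hC : 0 ≤ C)
    (hF : ∀ x : ℕ → ℝ, (∀ j ∈ Finset.Icc 1 m, x j ∈ Set.Icc (0 : ℝ) 1) →
      ∑ j ∈ Finset.Icc 1 m, x j ≤ b → F x ≤ C) :
    budgetSup m b F ≤ C := by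
  refine Real.sSup_le ?_ hC
  rintro _ ⟨x, hx, hxb, rfl⟩
  exact hF x hx hxb

theorem budgetSup_concavifyN_vagg_le {A : Set (Finset ℕ)} {f : ℝ} {k : ℕ} (hf : 0 ≤ f)
    (hb : 0 ≤ b) (hk : 0 < k) (hA : ∀ T, IsHittingSet A T → k ≤ T.card) :
    budgetSup m b (concavifyN m fun T => vagg A f (indVec T)) ≤ f / k * b := by
  refine budgetSup_le (by positivity) fun x hx hxb => ?_
  have sum_nonneg : 0 ≤ ∑ j ∈ Finset.Icc 1 m, x j := Finset.sum_nonneg fun j hj => (hx j hj).1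
  have majorant : ∀ T ⊆ Finset.Icc 1 m,
      vagg A f (indVec T) ≤ 0 + ∑ j ∈ Finset.Icc 1 m, f / k * indVec T j := fun T hT => by
    rw [zero_add, ← Finset.mul_sum, sum_indVec, Finset.inter_eq_right.mpr hT]
    exact vagg_indVec_le_mul_card hf hk (hA T)
  have majorant_at_x : 0 + ∑ j ∈ Finset.Icc 1 m, f / k * x j
      = f / k * ∑ j ∈ Finset.Icc 1 m, x j := by rw [zero_add, Finset.mul_sum]
  calc concavifyN m (fun T => vagg A f (indVec T)) x
      ≤ 0 + ∑ j ∈ Finset.Icc 1 m, f / k * x j :=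
        concavifyN_le_of_affine_majorant majorant (by rw [majorant_at_x]; positivity)
    _ = f / k * ∑ j ∈ Finset.Icc 1 m, x j := majorant_at_x
    _ ≤ f / k * b := by gcongr

theorem budgetSup_vagg_eq {A : Set (Finset ℕ)} {f : ℝ} (hf : 0 ≤ f) {x : ℕ → ℝ}
    (hx : ∀ j ∈ Finset.Icc 1 m, x j ∈ Set.Icc (0 : ℝ) 1) (hxb : ∑ j ∈ Finset.Icc 1 m, x j ≤ b)
    (hxA : ∀ S ∈ A, 1 ≤ ∑ j ∈ S, x j) :
    budgetSup m b (vagg A f) = f := by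
  refine (budgetSup_le hf fun z _ _ => vagg_le hf z).antisymm
    (le_csSup ⟨f, ?_⟩ ⟨x, hx, hxb, (vagg_eq_of_one_le_sum hf hxA).symm⟩)
  rintro _ ⟨z, -, -, rfl⟩
  exact vagg_le hf z

end budgetSup

theorem card_lt_card_add_of_forall_not_disjoint {N : Type*} {U T : Finset N} {k : ℕ}
    (hT : ∀ S ⊆ U, S.card = k → ¬ Disjoint S T) : U.card < T.card + k := by
  classical
  by_contra! hle
  have k_le_card_sdiff : k ≤ (U \ T).card :=
    (Nat.le_sub_of_add_le' hle).trans (Finset.le_card_sdiff T U)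
  obtain ⟨S, hS, hSk⟩ := Finset.exists_subset_card_eq k_le_card_sdiff
  exact hT S (hS.trans Finset.sdiff_subset) hSk
    (Finset.disjoint_of_subset_left hS Finset.sdiff_disjoint)

theorem lt_card_of_isHittingSet_A2 {n : ℕ} {T : Finset ℕ} (hT : IsHittingSet (A2 n) T) :
    n < T.card := by
  have h := card_lt_card_add_of_forall_not_disjoint (U := Finset.Icc 3 (2 * n + 2)) (T := T)
    fun S hS hSn => hT S (Or.inr ⟨hS, hSn⟩)
  rw [Nat.card_Icc] at h
  omega

theorem fractionalHit_of_mem {n j : ℕ} (hj : j ∈ Finset.Icc 3 (2 * n + 2)) :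
    fractionalHit n j = 1 / n :=
  if_pos hj

theorem fractionalHit_of_notMem {n j : ℕ} (hj : j ∉ Finset.Icc 3 (2 * n + 2)) :
    fractionalHit n j = 1 :=
  if_neg hj

theorem fractionalHit_mem_Icc (n j : ℕ) : fractionalHit n j ∈ Set.Icc (0 : ℝ) 1 := by
  unfold fractionalHit
  split_ifs
  · exact ⟨Nat.one_div_cast_nonneg n, by simpa using Nat.cast_inv_le_one n⟩
  · exact ⟨zero_le_one, le_rfl⟩

theorem sum_fractionalHit_of_subset {n : ℕ} {S : Finset ℕ}
    (hS : S ⊆ Finset.Icc 3 (2 * n + 2)) : ∑ j ∈ S, fractionalHit n j = S.card / n := by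
  rw [Finset.sum_congr rfl fun j hj => fractionalHit_of_mem (hS hj), Finset.sum_const,
    nsmul_eq_mul, mul_one_div]

theorem sum_fractionalHit {n : ℕ} (hn : 0 < n) :
    ∑ j ∈ Finset.Icc 1 (2 * n + 4), fractionalHit n j = 6 := by
  have middle_subset : Finset.Icc 3 (2 * n + 2) ⊆ Finset.Icc 1 (2 * n + 4) :=
    Finset.Icc_subset_Icc (by omega) (by omega)
  have card_middle : (Finset.Icc 3 (2 * n + 2)).card = 2 * n := by rw [Nat.card_Icc]; omega
  have card_outer : (Finset.Icc 1 (2 * n + 4) \ Finset.Icc 3 (2 * n + 2)).card = 4 := by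
    rw [Finset.card_sdiff_of_subset middle_subset, card_middle, Nat.card_Icc]; omega
  have sum_middle : ∑ j ∈ Finset.Icc 3 (2 * n + 2), fractionalHit n j = 2 := by
    rw [sum_fractionalHit_of_subset subset_rfl, card_middle]
    push_cast
    field_simp
  have sum_outer :
      ∑ j ∈ Finset.Icc 1 (2 * n + 4) \ Finset.Icc 3 (2 * n + 2), fractionalHit n j = 4 := by
    rw [Finset.sum_congr rfl fun j hj => fractionalHit_of_notMem (Finset.mem_sdiff.mp hj).2,
      Finset.sum_const, card_outer]
    norm_num
  rw [← Finset.sum_sdiff middle_subset, sum_outer, sum_middle]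
  norm_num

theorem one_le_sum_fractionalHit {n : ℕ} (hn : 0 < n) {S : Finset ℕ} (hS : S ∈ A2 n) :
    1 ≤ ∑ j ∈ S, fractionalHit n j := by
  rcases hS with (rfl | rfl | rfl | rfl) | ⟨hS, hSn⟩
  iterate 4 · simp [fractionalHit]
  rw [sum_fractionalHit_of_subset hS, hSn, div_self (by exact_mod_cast hn.ne')]

/-- Proposition 4(ii) of the paper.
For `γ > 1` and an integer `n ≥ max(6γ, 2)`, on the instance `A2 n` with `m = 2n+4` and
budget set `X̄ = {x ∈ [0,1]^m : ∑_{j=1}^m x_j ≤ 6}`, the bound from the tightest concave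
relaxation (the concavification `g` of the restriction of `v^agg` to binary points)
times `γ` is still at most the bound from the aggregated LP relaxation. -/
theorem stmt_16 (γ : ℝ) (hγ : 1 < γ) (n : ℕ) (hn2 : 2 ≤ n) (hnγ : 6 * γ ≤ (n : ℝ))
    (f : ℝ) (hf : 0 < f) :
    γ * sSup {t | ∃ x : ℕ → ℝ,
        (∀ j ∈ Finset.Icc 1 (2 * n + 4), x j ∈ Set.Icc (0 : ℝ) 1) ∧
        (∑ j ∈ Finset.Icc 1 (2 * n + 4), x j) ≤ 6 ∧
        t = concavifyN (2 * n + 4) (fun T => vagg (A2 n) f (indVec T)) x}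
      ≤ sSup {t | ∃ x : ℕ → ℝ,
        (∀ j ∈ Finset.Icc 1 (2 * n + 4), x j ∈ Set.Icc (0 : ℝ) 1) ∧
        (∑ j ∈ Finset.Icc 1 (2 * n + 4), x j) ≤ 6 ∧
        t = vagg (A2 n) f x} := by
  have n_pos : 0 < n := by omega
  have concave_bound : budgetSup (2 * n + 4) 6
      (concavifyN (2 * n + 4) fun T => vagg (A2 n) f (indVec T)) ≤ f / n * 6 :=
    budgetSup_concavifyN_vagg_le hf.le (by norm_num) n_pos fun _ hT =>
      (lt_card_of_isHittingSet_A2 hT).le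
  have lp_bound : budgetSup (2 * n + 4) 6 (vagg (A2 n) f) = f :=
    budgetSup_vagg_eq hf.le (fun j _ => fractionalHit_mem_Icc n j) (sum_fractionalHit n_pos).le
      fun _ hS => one_le_sum_fractionalHit n_pos hS
  calc γ * budgetSup (2 * n + 4) 6 (concavifyN (2 * n + 4) fun T => vagg (A2 n) f (indVec T))
      ≤ γ * (f / n * 6) := by gcongr
    _ = f * (6 * γ / n) := by ring
    _ ≤ f := mul_le_of_le_one_right hf.le (div_le_one_of_le₀ hnγ n.cast_nonneg)
    _ = budgetSup (2 * n + 4) 6 (vagg (A2 n) f) := lp_bound.symm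
end

section
/- Let N be a finite set, R a finite nonempty index set, for each r ∈ R let C_r be a finite family of subsets of N, let 𝒜 = {⋃_{r∈R} S_r : S_r ∈ C_r for each r ∈ R}, and fix f > 0. Then for every binary vector x ∈ {0,1}^N, v^disagg(x) = v^agg(x); moreover this common value equals f if there exists r ∈ R with ∑_{j∈S} x_j ≥ 1 for every S ∈ C_r, and equals 0 otherwise. Here v^disagg(x) = sup{ f·∑_{r∈R} z_r : z ∈ [0,1]^R, ∑_r z_r ≤ 1, ∑_{j∈S} x_j ≥ z_r for every r ∈ R, S ∈ C_r } and v^agg(x) = sup{ f·y : y ∈ [0,1], ∑_{j∈S} x_j ≥ y for every S ∈ 𝒜 }. -/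
/-!
When every weight is `0` or at least `1`, so is the weight of every set. If for some `r` all sets
of `C r` have weight at least `1`, so do all aggregated sets, since each contains a member of `C r`;
both programs then attain the bound `f`. Otherwise every `C r` contains a set of weight `0`, which
forces every `z r` to vanish, and the union of these sets is an aggregated set of weight `0`, which
forces `y` to vanish.
-/

section Weights

variable {N R M : Type*} [AddCommMonoid M] [PartialOrder M] [IsOrderedAddMonoid M] {x : N → M}

lemma sum_eq_zero_or_le_sum {c : M} (hc : 0 ≤ c) {S : Finset N}
    (hx : ∀ j ∈ S, x j = 0 ∨ c ≤ x j) : ∑ j ∈ S, x j = 0 ∨ c ≤ ∑ j ∈ S, x j := by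
  by_cases hzero : ∀ j ∈ S, x j = 0
  · exact .inl (Finset.sum_eq_zero hzero)
  · push Not at hzero
    obtain ⟨j, hj, hj_ne⟩ := hzero
    have hnonneg : ∀ i ∈ S, 0 ≤ x i := fun i hi => (hx i hi).elim (fun h => h.ge) hc.trans
    exact .inr (((hx j hj).resolve_left hj_ne).trans (Finset.single_le_sum hnonneg hj))

variable [DecidableEq N] [Fintype R] {C : R → Finset (Finset N)}

lemma le_sum_of_mem_aggFamily (hx : ∀ j, 0 ≤ x j) {c : M} {r : R}
    (hr : ∀ S ∈ C r, c ≤ ∑ j ∈ S, x j) {A : Finset N} (hA : A ∈ aggFamily C) :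
    c ≤ ∑ j ∈ A, x j := by
  obtain ⟨g, hg, rfl⟩ := hA
  have hsub : g r ⊆ Finset.univ.sup g := Finset.le_sup (Finset.mem_univ r)
  exact (hr _ (hg r)).trans (Finset.sum_le_sum_of_subset_of_nonneg hsub fun j _ _ => hx j)

lemma exists_mem_aggFamily_sum_eq_zero (hx : ∀ j, 0 ≤ x j)
    (h : ∀ r, ∃ S ∈ C r, ∑ j ∈ S, x j = 0) : ∃ A ∈ aggFamily C, ∑ j ∈ A, x j = 0 := by
  choose g hg hsum using h
  refine ⟨_, ⟨g, hg, rfl⟩, Finset.sum_eq_zero fun j hj => ?_⟩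
  obtain ⟨r, -, hjr⟩ := Finset.mem_sup.mp hj
  exact (Finset.sum_eq_zero_iff_of_nonneg fun i _ => hx i).mp (hsum r) j hjr

end Weights

section Values

variable {N R : Type*} {f : ℝ} {x : N → ℝ}

lemma vagg_eq_of_forall_one_le_sum {A : Set (Finset N)} (hf : 0 ≤ f)
    (hA : ∀ S ∈ A, 1 ≤ ∑ j ∈ S, x j) : vagg A f x = f := by
  refine IsGreatest.csSup_eq ⟨⟨1, by simp, hA, (mul_one f).symm⟩, ?_⟩
  rintro _ ⟨y, hy, -, rfl⟩
  exact mul_le_of_le_one_right hf hy.2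

lemma vagg_eq_zero_of_sum_eq_zero {A : Set (Finset N)} (hx : ∀ j, 0 ≤ x j) {S : Finset N}
    (hS : S ∈ A) (hsum : ∑ j ∈ S, x j = 0) : vagg A f x = 0 := by
  refine IsGreatest.csSup_eq
    ⟨⟨0, by simp, fun _ _ => Finset.sum_nonneg fun j _ => hx j, (mul_zero f).symm⟩, ?_⟩
  rintro _ ⟨y, hy, hyA, rfl⟩
  have hy_zero : y = 0 := le_antisymm ((hyA S hS).trans_eq hsum) hy.1
  simp [hy_zero]

variable [Fintype R] {C : R → Finset (Finset N)}

lemma vdisagg_eq_of_forall_one_le_sum (hf : 0 ≤ f) (hx : ∀ j, 0 ≤ x j) {r : R}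
    (hr : ∀ S ∈ C r, 1 ≤ ∑ j ∈ S, x j) : vdisagg C f x = f := by
  classical
  refine IsGreatest.csSup_eq ⟨⟨Pi.single r 1, fun s => ?_, by simp, fun s S hS => ?_, by simp⟩, ?_⟩
  · obtain rfl | hs := eq_or_ne s r
    · simp
    · simp [hs]
  · obtain rfl | hs := eq_or_ne s r
    · simpa using hr S hS
    · simpa [hs] using Finset.sum_nonneg fun j _ => hx j
  · rintro _ ⟨z, -, hz, -, rfl⟩
    exact mul_le_of_le_one_right hf hz

lemma vdisagg_eq_zero_of_forall_exists_sum_eq_zero (hx : ∀ j, 0 ≤ x j)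
    (h : ∀ r, ∃ S ∈ C r, ∑ j ∈ S, x j = 0) : vdisagg C f x = 0 := by
  refine IsGreatest.csSup_eq
    ⟨⟨0, by simp, by simp, fun _ _ _ => Finset.sum_nonneg fun j _ => hx j, by simp⟩, ?_⟩
  rintro _ ⟨z, hz, -, hzC, rfl⟩
  have hz_zero : ∀ r, z r = 0 := fun r =>
    let ⟨S, hS, hsum⟩ := h r
    le_antisymm ((hzC r S hS).trans_eq hsum) (hz r).1
  simp [hz_zero]

end Values

theorem stmt_19_general {N R : Type*} [DecidableEq N] [Fintype R]
    (C : R → Finset (Finset N)) {f : ℝ} (hf : 0 ≤ f)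
    {x : N → ℝ} (hx : ∀ j, x j = 0 ∨ 1 ≤ x j) :
    vdisagg C f x = vagg (aggFamily C) f x ∧
    ((∃ r : R, ∀ S ∈ C r, 1 ≤ ∑ j ∈ S, x j) → vagg (aggFamily C) f x = f) ∧
    (¬ (∃ r : R, ∀ S ∈ C r, 1 ≤ ∑ j ∈ S, x j) → vagg (aggFamily C) f x = 0) := by
  have hx_nonneg : ∀ j, 0 ≤ x j := fun j => (hx j).elim (fun h => h.ge) zero_le_one.trans
  by_cases hserved : ∃ r : R, ∀ S ∈ C r, 1 ≤ ∑ j ∈ S, x j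
  · obtain ⟨r, hr⟩ := hserved
    have hagg : vagg (aggFamily C) f x = f :=
      vagg_eq_of_forall_one_le_sum hf fun _ => le_sum_of_mem_aggFamily hx_nonneg hr
    exact ⟨(vdisagg_eq_of_forall_one_le_sum hf hx_nonneg hr).trans hagg.symm,
      fun _ => hagg, fun hnot => absurd ⟨r, hr⟩ hnot⟩
  · have hzero : ∀ r, ∃ S ∈ C r, ∑ j ∈ S, x j = 0 := by
      by_contra! hne
      obtain ⟨r, hr⟩ := hne
      exact hserved ⟨r, fun S hS =>
        (sum_eq_zero_or_le_sum zero_le_one fun j _ => hx j).resolve_left (hr S hS)⟩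
    obtain ⟨A, hA, hsum⟩ := exists_mem_aggFamily_sum_eq_zero hx_nonneg hzero
    have hagg : vagg (aggFamily C) f x = 0 := vagg_eq_zero_of_sum_eq_zero hx_nonneg hA hsum
    exact ⟨(vdisagg_eq_zero_of_forall_exists_sum_eq_zero hx_nonneg hzero).trans hagg.symm,
      fun h => absurd h hserved, fun _ => hagg⟩

/-- claim in Section 3 of the paper.
For every binary vector `x ∈ {0,1}^N`, `v^disagg(x) = v^agg(x)`; moreover the common
value equals `f` if there exists `r ∈ R` with `∑_{j∈S} x_j ≥ 1` for every `S ∈ C_r`,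
and equals `0` otherwise. -/
theorem stmt_19 {N R : Type*} [Fintype N] [DecidableEq N] [Fintype R] [Nonempty R]
    (C : R → Finset (Finset N)) (f : ℝ) (hf : 0 < f)
    (x : N → ℝ) (hx : ∀ j, x j = 0 ∨ x j = 1) :
    vdisagg C f x = vagg (aggFamily C) f x ∧
    ((∃ r : R, ∀ S ∈ C r, 1 ≤ ∑ j ∈ S, x j) → vagg (aggFamily C) f x = f) ∧
    (¬ (∃ r : R, ∀ S ∈ C r, 1 ≤ ∑ j ∈ S, x j) → vagg (aggFamily C) f x = 0) :=
  stmt_19_general C hf.le fun j => (hx j).imp_right Eq.ge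
end
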